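/- Let θ be a Borel probability (or sub-probability) measure on O(n) satisfying the Frostman condition θ(B(g, r)) ≤ r^α for all g ∈ O(n) and r > 0, with α > (n-1)(n-2)/2, where B(g,r) is the ball in operator norm. Then for all nonzero x, z ∈ ℝⁿ and all r > 0, θ({g ∈ O(n) : |x - g(z)| < r}) ≤ C(n, α) · (r/|z|)^{α - (n-1)(n-2)/2}. -/

import Mathlib

open MeasureTheory Metric Set
open scoped ENNReal

abbrev EE (n : ℕ) := EuclideanSpace ℝ (Fin n)
abbrev GG (n : ℕ) := EuclideanSpace ℝ (Fin n) ≃ₗᵢ[ℝ] EuclideanSpace ℝ (Fin n)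

noncomputable def opc {n : ℕ} (g : GG n) : EE n →L[ℝ] EE n :=
  g.toLinearIsometry.toContinuousLinearMap

theorem opc_apply {n : ℕ} (g : GG n) (v : EE n) : opc g v = g v := rfl

theorem opc_norm_le {n : ℕ} (g : GG n) : ‖opc g‖ ≤ 1 :=
  ContinuousLinearMap.opNorm_le_bound _ zero_le_one (fun v => by simp [opc_apply])

theorem exists_net (n : ℕ) (ε : ℝ) (hε : 0 < ε) :
    ∃ T : Finset (GG n), ∀ g : GG n, ∃ k ∈ T, ‖opc g - opc k‖ ≤ ε := by
  have hp : ProperSpace (EE n →L[ℝ] EE n) := FiniteDimensional.proper ℝ _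
  have htb : TotallyBounded (Set.range (opc (n := n))) := by
    refine ((isCompact_closedBall (0 : EE n →L[ℝ] EE n) 1).totallyBounded).subset ?_
    rintro _ ⟨g, rfl⟩
    simpa using opc_norm_le g
  obtain ⟨t, ht, hfin, hcov⟩ := Metric.finite_approx_of_totallyBounded htb ε hε
  have ht' : ∀ y ∈ t, ∃ g : GG n, opc g = y := fun y hy => ht hy
  choose! f hf using ht'
  classical
  refine ⟨hfin.toFinset.image f, fun g => ?_⟩
  have hg := hcov (Set.mem_range_self g)
  simp only [mem_iUnion] at hg
  obtain ⟨y, hy, hgy⟩ := hg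
  refine ⟨f y, Finset.mem_image_of_mem f (hfin.mem_toFinset.2 hy), ?_⟩
  rw [hf y hy, ← dist_eq_norm]
  exact (mem_ball.1 hgy).le

theorem cells {G ι : Type*} [MeasurableSpace G] (θ : Measure G) (S : Set G)
    (Φ : G → ι) (T : Finset ι) (hT : ∀ g ∈ S, Φ g ∈ T) (c : ℝ≥0∞)
    (h : ∀ g ∈ S, θ {h | h ∈ S ∧ Φ h = Φ g} ≤ c) : θ S ≤ T.card * c := by
  have hS : S ⊆ ⋃ i ∈ T, {h | h ∈ S ∧ Φ h = i} := by
    intro g hg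
    simp only [mem_iUnion]
    exact ⟨Φ g, hT g hg, hg, rfl⟩
  calc θ S ≤ θ (⋃ i ∈ T, {h | h ∈ S ∧ Φ h = i}) := measure_mono hS
    _ ≤ ∑ i ∈ T, θ {h | h ∈ S ∧ Φ h = i} := measure_biUnion_finset_le _ _
    _ ≤ ∑ i ∈ T, c := by
      refine Finset.sum_le_sum fun i _ => ?_
      by_cases hi : ∃ g ∈ S, Φ g = i
      · obtain ⟨g, hg, rfl⟩ := hi
        exact h g hg
      · have : {h | h ∈ S ∧ Φ h = i} = ∅ := by
          ext g
          simp only [mem_ofPred_eq, mem_empty_iff_false, iff_false]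
          exact fun hg => hi ⟨g, hg⟩
        simp [this]
    _ = T.card * c := by simp

theorem norm_le_entries {n : ℕ} (b : OrthonormalBasis (Fin n) ℝ (EE n)) (k : GG n)
    (u : EE n →L[ℝ] EE n) (c : ℝ) (hc : 0 ≤ c)
    (h : ∀ i j, |inner ℝ (k (b i)) (u (b j))| ≤ c) : ‖u‖ ≤ (n : ℝ) ^ 2 * c := by
  have hcol : ∀ j, ‖u (b j)‖ ≤ n * c := by
    intro j
    have h1 : u (b j) = ∑ i, inner ℝ (k (b i)) (u (b j)) • k (b i) := by
      have := (b.map k).sum_repr' (u (b j))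
      simpa using this.symm
    rw [h1]
    refine (norm_sum_le _ _).trans ?_
    calc _ ≤ ∑ i : Fin n, c := by
          refine Finset.sum_le_sum fun i _ => ?_
          rw [norm_smul, k.norm_map, b.norm_eq_one, mul_one]
          exact h i j
      _ = n * c := by simp
  refine ContinuousLinearMap.opNorm_le_bound _ (by positivity) fun v => ?_
  have h1 : u v = ∑ j, inner ℝ (b j) v • u (b j) := by
    conv_lhs => rw [← b.sum_repr' v]
    simp [map_sum]
  rw [h1]
  refine (norm_sum_le _ _).trans ?_
  calc _ ≤ ∑ j : Fin n, ‖v‖ * (n * c) := by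
        refine Finset.sum_le_sum fun j _ => ?_
        rw [norm_smul]
        have := norm_inner_le_norm (𝕜 := ℝ) (b j) v
        rw [b.norm_eq_one, one_mul] at this
        exact mul_le_mul this (hcol j) (norm_nonneg _) (norm_nonneg _)
    _ = n ^ 2 * c * ‖v‖ := by simp; ring

theorem almost_skew {n : ℕ} (b : OrthonormalBasis (Fin n) ℝ (EE n)) (g h k : GG n) (ε : ℝ)
    (hg : ‖opc g - opc k‖ ≤ ε) (hh : ‖opc h - opc k‖ ≤ ε) (i j : Fin n) :
    |inner ℝ (k (b i)) ((opc g - opc h) (b j)) + inner ℝ (k (b j)) ((opc g - opc h) (b i))|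
      ≤ 2 * ε * ‖opc g - opc h‖ := by
  have key : inner ℝ (k (b i)) ((opc g - opc h) (b j)) + inner ℝ (k (b j)) ((opc g - opc h) (b i))
      = - inner ℝ ((opc h - opc k) (b i)) ((opc g - opc h) (b j))
        - inner ℝ ((opc g - opc k) (b j)) ((opc g - opc h) (b i)) := by
    have h1 : inner ℝ (g (b i)) (g (b j)) = inner ℝ (h (b i)) (h (b j)) := by
      rw [g.inner_map_map, h.inner_map_map]
    simp only [sub_apply, opc_apply, inner_sub_left, inner_sub_right]
    have h2 := real_inner_comm (g (b i)) (g (b j))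
    have h3 := real_inner_comm (g (b j)) (h (b i))
    linarith
  have bd : ∀ (A B : EE n →L[ℝ] EE n) (i j : Fin n), |inner ℝ (A (b i)) (B (b j))| ≤ ‖A‖ * ‖B‖ := by
    intro A B i j
    refine (abs_real_inner_le_norm _ _).trans ?_
    have hA := A.le_opNorm (b i)
    have hB := B.le_opNorm (b j)
    rw [b.norm_eq_one, mul_one] at hA hB
    gcongr
  rw [key]
  have e1 := bd (opc h - opc k) (opc g - opc h) i j
  have e2 := bd (opc g - opc k) (opc g - opc h) j i
  have e3 : ‖opc h - opc k‖ * ‖opc g - opc h‖ ≤ ε * ‖opc g - opc h‖ := by gcongr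
  have e4 : ‖opc g - opc k‖ * ‖opc g - opc h‖ ≤ ε * ‖opc g - opc h‖ := by gcongr
  rw [abs_le] at e1 e2 ⊢
  constructor <;> linarith [e1.1, e1.2, e2.1, e2.2]

theorem cell_diam {m : ℕ} (b : OrthonormalBasis (Fin (m + 1)) ℝ (EE (m + 1)))
    (g h k : GG (m + 1)) (ρ : ℝ) (hρ : 0 < ρ)
    (hg : ‖opc g - opc k‖ ≤ 1 / (4 * ((m + 1 : ℕ) : ℝ) ^ 2))
    (hh : ‖opc h - opc k‖ ≤ 1 / (4 * ((m + 1 : ℕ) : ℝ) ^ 2))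
    (h0 : ‖g (b 0) - h (b 0)‖ ≤ 2 * ρ)
    (hij : ∀ i j : Fin m, i < j →
      |inner ℝ (k (b i.succ)) (g (b j.succ)) - inner ℝ (k (b i.succ)) (h (b j.succ))| ≤ ρ) :
    ‖opc g - opc h‖ ≤ 4 * ((m + 1 : ℕ) : ℝ) ^ 2 * ρ := by
  set N : ℝ := ((m + 1 : ℕ) : ℝ) with hN
  have hNpos : 0 < N := by rw [hN]; positivity
  set ε : ℝ := 1 / (4 * N ^ 2) with hε
  have hεpos : 0 < ε := by positivity
  set U : ℝ := ‖opc g - opc h‖ with hU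
  have hU0 : 0 ≤ U := norm_nonneg _
  have hεU : 0 ≤ ε * U := by positivity
  have skew := almost_skew b g h k ε hg hh
  have col0 : ∀ i, |inner ℝ (k (b i)) ((opc g - opc h) (b 0))| ≤ 2 * ρ := by
    intro i
    refine (abs_real_inner_le_norm _ _).trans ?_
    rw [k.norm_map, b.norm_eq_one, one_mul]
    exact h0
  have ent : ∀ i j, |inner ℝ (k (b i)) ((opc g - opc h) (b j))| ≤ 2 * ρ + 2 * ε * U := by
    intro i j
    have upper : ∀ i j : Fin m, i < j →
      |inner ℝ (k (b i.succ)) ((opc g - opc h) (b j.succ))| ≤ ρ := by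
      intro i j hlt
      have := hij i j hlt
      rwa [← inner_sub_right] at this
    have s := skew i j
    rw [abs_le] at s ⊢
    rcases Fin.eq_zero_or_eq_succ j with rfl | ⟨j, rfl⟩
    · have := abs_le.1 (col0 i)
      constructor <;> linarith [this.1, this.2]
    rcases Fin.eq_zero_or_eq_succ i with rfl | ⟨i, rfl⟩
    · have := abs_le.1 (col0 j.succ)
      constructor <;> linarith [this.1, this.2, s.1, s.2]
    rcases lt_trichotomy i j with hlt | rfl | hlt
    · have := abs_le.1 (upper i j hlt)
      constructor <;> linarith [this.1, this.2]
    · constructor <;> linarith [s.1, s.2]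
    · have := abs_le.1 (upper j i hlt)
      constructor <;> linarith [this.1, this.2, s.1, s.2]
  have := norm_le_entries b k (opc g - opc h) _ (by positivity) ent
  rw [← hN, ← hU] at this
  have e : N ^ 2 * (2 * ρ + 2 * ε * U) = 2 * N ^ 2 * ρ + U / 2 := by
    rw [hε]; field_simp; ring
  linarith

theorem floor_eq_close (a b ρ : ℝ) (hρ : 0 < ρ) (h : ⌊a / ρ⌋ = ⌊b / ρ⌋) : |a - b| ≤ ρ := by
  have := (Int.abs_sub_lt_one_of_floor_eq_floor h).le
  rw [← sub_div, abs_div, abs_of_pos hρ, div_le_one hρ] at this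
  exact this

theorem floor_mem (a ρ : ℝ) (hρ : 0 < ρ) (h : |a| ≤ 1) :
    ⌊a / ρ⌋ ∈ Finset.Icc (-⌈1 / ρ⌉) ⌈1 / ρ⌉ := by
  rw [abs_le] at h
  have hc := Int.le_ceil (1 / ρ)
  have e1 : a / ρ ≤ 1 / ρ := by gcongr; exact h.2
  have e2 : -(1 / ρ) ≤ a / ρ := by rw [← neg_div]; gcongr; exact h.1
  rw [Finset.mem_Icc]
  constructor
  · rw [Int.le_floor]; push_cast; linarith
  · have := Int.floor_le (a / ρ)
    exact_mod_cast this.trans (e1.trans hc)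

theorem card_pairs (m : ℕ) :
    (Fintype.card (Σ j : Fin m, Fin j.val) : ℝ) = (((m + 1 : ℕ) : ℝ) - 1) * (((m + 1 : ℕ) : ℝ) - 2) / 2 := by
  rw [Fintype.card_sigma]
  simp only [Fintype.card_fin]
  rw [Fin.sum_univ_eq_sum_range (fun i => i) m]
  have h : ((∑ i ∈ Finset.range m, i : ℕ) : ℝ) = (m : ℝ) * (m - 1) / 2 := by
    induction m with
    | zero => simp
    | succ m ih => rw [Finset.sum_range_succ]; push_cast at ih ⊢; rw [ih]; ring
  rw [h]; push_cast; ring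

theorem exists_basis {m : ℕ} (w : EE (m + 1)) (hw : ‖w‖ = 1) :
    ∃ b : OrthonormalBasis (Fin (m + 1)) ℝ (EE (m + 1)), b 0 = w := by
  have h : Orthonormal ℝ (({0} : Set (Fin (m + 1))).domRestrict (fun _ => w)) := by
    constructor
    · intro i; exact hw
    · intro i j hne
      exact absurd (Subsingleton.elim i j) hne
  obtain ⟨b, hb⟩ := Orthonormal.exists_orthonormalBasis_extension_of_card_eq (by simp) h
  exact ⟨b, hb 0 rfl⟩

theorem small_case {m : ℕ} (α : ℝ)
    [MeasurableSpace (GG (m + 1))] (T : Finset (GG (m + 1)))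
    (hT : ∀ g : GG (m + 1), ∃ k ∈ T, ‖opc g - opc k‖ ≤ 1 / (4 * ((m + 1 : ℕ) : ℝ) ^ 2))
    (θ : Measure (GG (m + 1)))
    (hF : ∀ (g : GG (m + 1)) (r : ℝ), 0 < r →
      θ {h | ‖opc h - opc g‖ ≤ r} ≤ ENNReal.ofReal (r ^ α))
    (x w : EE (m + 1)) (hw : ‖w‖ = 1) (ρ : ℝ) (hρ : 0 < ρ) (hρ1 : ρ ≤ 1) :
    θ {g | ‖x - g w‖ < ρ} ≤ ENNReal.ofReal
      ((T.card * 5 ^ (Fintype.card (Σ j : Fin m, Fin j.val)) * (4 * ((m + 1 : ℕ) : ℝ) ^ 2) ^ α) *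
        ρ ^ (α - (Fintype.card (Σ j : Fin m, Fin j.val) : ℝ))) := by
  classical
  obtain ⟨b, hb⟩ := exists_basis w hw
  choose κ hκT hκ using hT
  set P := Σ j : Fin m, Fin j.val
  set d := Fintype.card P with hd
  let φ : GG (m + 1) → P → ℤ := fun g p =>
    ⌊inner ℝ (κ g (b (Fin.succ ⟨p.2.val, p.2.isLt.trans p.1.isLt⟩))) (g (b p.1.succ)) / ρ⌋
  let Q : Finset (GG (m + 1) × (P → ℤ)) :=
    T ×ˢ Fintype.piFinset (fun _ => Finset.Icc (-⌈1 / ρ⌉) ⌈1 / ρ⌉)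
  have hR : 0 < 4 * ((m + 1 : ℕ) : ℝ) ^ 2 * ρ := by positivity
  have main := cells θ {g | ‖x - g w‖ < ρ} (fun g => (κ g, φ g)) Q ?_
    (ENNReal.ofReal ((4 * ((m + 1 : ℕ) : ℝ) ^ 2 * ρ) ^ α)) ?_
  · refine main.trans ?_
    rw [← ENNReal.ofReal_natCast, ← ENNReal.ofReal_mul (by positivity)]
    apply ENNReal.ofReal_le_ofReal
    have hK : (((Finset.Icc (-⌈1 / ρ⌉) ⌈1 / ρ⌉).card : ℕ) : ℝ) ≤ 5 / ρ := by
      have hc := Int.ceil_lt_add_one (1 / ρ)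
      have hc0 : 0 ≤ ⌈1 / ρ⌉ := Int.ceil_nonneg (by positivity)
      have h1 : 1 ≤ 1 / ρ := by rw [le_div_iff₀ hρ]; linarith
      rw [Int.card_Icc]
      have : (((⌈1 / ρ⌉ + 1 - -⌈1 / ρ⌉).toNat : ℕ) : ℝ) = ((⌈1 / ρ⌉ + 1 - -⌈1 / ρ⌉ : ℤ) : ℝ) := by
        have := Int.toNat_of_nonneg (show 0 ≤ ⌈1 / ρ⌉ + 1 - -⌈1 / ρ⌉ by omega)
        exact_mod_cast this
      rw [this]; push_cast
      have h5 : 5 / ρ = 5 * (1 / ρ) := by ring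
      rw [h5]; linarith
    have hQ : (Q.card : ℝ) ≤ T.card * (5 / ρ) ^ d := by
      simp only [Q, Finset.card_product, Fintype.card_piFinset, Finset.prod_const, Finset.card_univ]
      push_cast
      gcongr
    calc (Q.card : ℝ) * (4 * ((m + 1 : ℕ) : ℝ) ^ 2 * ρ) ^ α
        ≤ T.card * (5 / ρ) ^ d * (4 * ((m + 1 : ℕ) : ℝ) ^ 2 * ρ) ^ α := by gcongr
      _ = _ := by
        rw [Real.mul_rpow (by positivity) hρ.le, Real.rpow_sub hρ, Real.rpow_natCast, div_pow]
        ring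
  · intro g _
    refine Finset.mem_product.2 ⟨hκT g, ?_⟩
    refine Fintype.mem_piFinset.2 fun p => floor_mem _ _ hρ ?_
    refine (abs_real_inner_le_norm _ _).trans ?_
    simp
  · intro g hg
    refine le_trans (measure_mono ?_) (hF g _ hR)
    rintro h ⟨hh, he⟩
    simp only [Prod.mk.injEq] at he
    obtain ⟨he1, he2⟩ := he
    refine cell_diam b h g (κ g) ρ hρ (he1 ▸ hκ h) (hκ g) ?_ ?_
    · rw [hb]
      have e1 : ‖x - g w‖ < ρ := hg
      have e2 : ‖x - h w‖ < ρ := hh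
      have : h w - g w = (x - g w) - (x - h w) := by abel
      rw [this]
      exact (norm_sub_le _ _).trans (by linarith)
    · intro i j hij
      have := congrFun he2 ⟨j, ⟨i.val, hij⟩⟩
      simp only [φ, he1] at this
      exact floor_eq_close _ _ _ hρ this

theorem stmt15 (n : ℕ) (α : ℝ)
    (hα : ((n : ℝ) - 1) * ((n : ℝ) - 2) / 2 < α)
    [MeasurableSpace (EuclideanSpace ℝ (Fin n) ≃ₗᵢ[ℝ] EuclideanSpace ℝ (Fin n))] :
    ∃ C : ℝ, 0 < C ∧
      ∀ θ : Measure (EuclideanSpace ℝ (Fin n) ≃ₗᵢ[ℝ] EuclideanSpace ℝ (Fin n)),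
        θ Set.univ ≤ 1 →
        (∀ (g : EuclideanSpace ℝ (Fin n) ≃ₗᵢ[ℝ] EuclideanSpace ℝ (Fin n)) (r : ℝ), 0 < r →
          θ {h | ‖h.toLinearIsometry.toContinuousLinearMap -
                  g.toLinearIsometry.toContinuousLinearMap‖ ≤ r} ≤
            ENNReal.ofReal (r ^ α)) →
        ∀ x z : EuclideanSpace ℝ (Fin n), x ≠ 0 → z ≠ 0 → ∀ r : ℝ, 0 < r →
          θ {g | ‖x - g z‖ < r} ≤
            ENNReal.ofReal (C * (r / ‖z‖) ^ (α - ((n : ℝ) - 1) * ((n : ℝ) - 2) / 2)) := by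
  rcases n with _ | m
  · refine ⟨1, one_pos, fun θ _ _ x z hx => ?_⟩
    exact absurd (Subsingleton.elim x 0) hx
  obtain ⟨T, hT⟩ := exists_net (m + 1) (1 / (4 * ((m + 1 : ℕ) : ℝ) ^ 2)) (by positivity)
  rw [← card_pairs] at hα ⊢
  set d := Fintype.card (Σ j : Fin m, Fin j.val) with hd
  set C₀ : ℝ := T.card * 5 ^ d * (4 * ((m + 1 : ℕ) : ℝ) ^ 2) ^ α with hC₀
  have hC₀n : 0 ≤ C₀ := by positivity
  refine ⟨C₀ + 1, by positivity, fun θ hθ hF x z _ hz r hr => ?_⟩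
  have hz' : 0 < ‖z‖ := norm_pos_iff.2 hz
  have hρ : 0 < r / ‖z‖ := by positivity
  rcases le_total (r / ‖z‖) 1 with h1 | h1
  · have hset : {g : GG (m + 1) | ‖x - g z‖ < r}
        = {g | ‖(‖z‖⁻¹ • x) - g (‖z‖⁻¹ • z)‖ < r / ‖z‖} := by
      ext g
      simp only [mem_ofPred_eq]
      rw [map_smul, ← smul_sub, norm_smul, norm_inv, norm_norm, inv_mul_eq_div,
        div_lt_div_iff_of_pos_right hz']
    rw [hset]
    refine (small_case α T hT θ hF (‖z‖⁻¹ • x) (‖z‖⁻¹ • z) ?_ _ hρ h1).trans ?_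
    · rw [norm_smul, norm_inv, norm_norm, inv_mul_cancel₀ hz'.ne']
    · apply ENNReal.ofReal_le_ofReal
      rw [← hd, ← hC₀]
      gcongr
      linarith
  · refine (measure_mono (subset_univ _)).trans (hθ.trans ?_)
    rw [← ENNReal.ofReal_one]
    apply ENNReal.ofReal_le_ofReal
    have := Real.one_le_rpow h1 (sub_nonneg.2 hα.le)
    nlinarith
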